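/- For every α ∈ (1, 3/2) there exists a constant C > 0 such that for every φ ∈ X with ∫_{ℝ³}(|φ − P|⁶ + |∇φ|²) dx < ∞ and every measurable set D ⊂ ℝ³, ∫_D |φ − P|^{6α} dx ≤ C c^{α−1} ∫_{ℝ³} (|φ − P|⁶ + |∇φ|²) dx, where c = sup_{y ∈ ℝ³} ∫_{B(y,1) ∩ D} (|φ − P|⁶ + |∇φ|²) dx and P = (0,0,0,1) is the north pole of S³. -/

import Mathlib

/- Common setting: Skyrme maps φ : ℝ³ → S³ ⊂ ℝ⁴ with weak partial derivatives. -/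

open MeasureTheory Real Filter
open scoped Topology ENNReal BigOperators

noncomputable section

abbrev R3 : Type := Fin 3 → ℝ
abbrev R4 : Type := Fin 4 → ℝ

/-- Euclidean dot product on ℝ⁴. -/
def dot (u v : R4) : ℝ := ∑ a, u a * v a

/-- Squared Euclidean norm on ℝ⁴. -/
def nsq (u : R4) : ℝ := dot u u

/-- |u∧v|² = |u|²|v|² − ⟨u,v⟩². -/
def wedgeSq (u v : R4) : ℝ := nsq u * nsq v - (dot u v) ^ 2

/-- Gram determinant of three vectors of ℝ⁴. -/
def gram (u v w : R4) : ℝ :=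
  Matrix.det !![dot u u, dot u v, dot u w; dot v u, dot v v, dot v w; dot w u, dot w v, dot w w]

/-- Determinant of the 4×4 matrix with columns a, b, c, d. -/
def det4 (a b c d : R4) : ℝ := Matrix.det (Matrix.of fun i j => ![a, b, c, d] j i)

/-- Smooth compactly supported test functions on ℝ³. -/
def IsTestFun {E : Type*} [NormedAddCommGroup E] [NormedSpace ℝ E] (ψ : R3 → E) : Prop :=
  ContDiff ℝ (⊤ : ℕ∞) ψ ∧ HasCompactSupport ψ

/-- A weakly differentiable map φ : ℝ³ → S³ ⊂ ℝ⁴ together with its weak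
partial derivatives `pderiv i = ∂ᵢφ`. -/
structure SkyrmeMap where
  toFun : R3 → R4
  pderiv : Fin 3 → R3 → R4
  meas : Measurable toFun
  pderiv_locInt : ∀ i, LocallyIntegrable (pderiv i) volume
  sphere : ∀ᵐ x : R3, nsq (toFun x) = 1
  weak : ∀ (i : Fin 3) (a : Fin 4) (ψ : R3 → ℝ), IsTestFun ψ →
    ∫ x : R3, fderiv ℝ ψ x (Pi.single i 1) * toFun x a
      = - ∫ x : R3, ψ x * pderiv i x a

/-- |∇φ|² = Σᵢ |∂ᵢφ|². -/
def gradSq (φ : SkyrmeMap) (x : R3) : ℝ := ∑ i, nsq (φ.pderiv i x)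

/-- |A(φ)|² = Σᵢⱼ |∂ᵢφ∧∂ⱼφ|². -/
def ASq (φ : SkyrmeMap) (x : R3) : ℝ := ∑ i, ∑ j, wedgeSq (φ.pderiv i x) (φ.pderiv j x)

/-- The Skyrme energy density |∇φ|² + |A(φ)|². -/
def energyDensity (φ : SkyrmeMap) (x : R3) : ℝ := gradSq φ x + ASq φ x

/-- φ ∈ X : finite Skyrme energy. -/
def memX (φ : SkyrmeMap) : Prop := Integrable (energyDensity φ) volume

/-- The Skyrme energy ℰ(φ). -/
def energy (φ : SkyrmeMap) : ℝ := ∫ x, energyDensity φ x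

/-- det(φ, ∇φ)(x). -/
def detDen (φ : SkyrmeMap) (x : R3) : ℝ :=
  det4 (φ.toFun x) (φ.pderiv 0 x) (φ.pderiv 1 x) (φ.pderiv 2 x)

/-- The topological degree d(φ) = (1/(2π²)) ∫ det(φ,∇φ). -/
def degree (φ : SkyrmeMap) : ℝ := (1 / (2 * π ^ 2)) * ∫ x, detDen φ x

/-- I_k = inf of the energy over maps of degree k. -/
def Skyrme.I (k : ℤ) : ℝ :=
  sInf {E : ℝ | ∃ φ : SkyrmeMap, memX φ ∧ degree φ = (k : ℝ) ∧ energy φ = E}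

/-- The north pole P = (0,0,0,1) of S³. -/
def northPole : R4 := ![0, 0, 0, 1]

/-- The Euclidean ball B(y,r) in ℝ³. -/
def eball (y : R3) (r : ℝ) : Set R3 := {x | ∑ i, (x i - y i) ^ 2 < r ^ 2}

/-!
The estimate is a consequence of the Sobolev embedding `W^{1,2} ⊂ L^{2d/(d-2)}` in dimension `d`.
If `|u| ≤ B`, then `|∇(|u|^q)| ≤ q B^{q-1} |∇u|`, so the Sobolev inequality applied to `η |u|^q`
with a cutoff `η`, together with Hölder's inequality, bounds `∫ W^{α-1} |u|^{2q}` on a ball by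
`(∫ W)^{α-1} ∫ (|u|^{2q} + |∇u|²)` on a larger ball, for every weight `W ≥ 0`. Averaging this over
all translates of the ball yields a global estimate with `(sup_y ∫_{B(y,r)} W)^{α-1}`. It holds at
first for `C¹` maps; the weight does not change under mollification, so Fatou's lemma carries it
over to weakly differentiable maps. Choosing `W = 1_D |u|^{2q}` with `u = φ - P` and `q = 3` gives
the theorem.
-/

open scoped Convolution NNReal
open ContinuousLinearMap (lsmul)
open Module (finrank)
open Metric (ball closedBall)

section Translation

variable {G V : Type*} [AddCommGroup G] [MeasurableSpace G] {μ : Measure G}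
  [NormedAddCommGroup V] [NormedSpace ℝ V]

section

variable [MeasurableAdd₂ G] [MeasurableNeg G] [SFinite μ] [μ.IsAddLeftInvariant]

theorem norm_convolution_lsmul_le_of_ae_norm_le {ρ : G → ℝ} {u : G → V} {B : ℝ}
    (hρ : Integrable ρ μ) (hu : ∀ᵐ x ∂μ, ‖u x‖ ≤ B) (x : G) :
    ‖(ρ ⋆[lsmul ℝ ℝ, μ] u) x‖ ≤ (∫ t, ‖ρ t‖ ∂μ) * B := by
  rw [← integral_mul_const]
  refine norm_integral_le_of_norm_le (hρ.norm.mul_const B) ?_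
  filter_upwards [(quasiMeasurePreserving_sub_left μ x).ae hu] with t ht
  simpa [norm_smul] using mul_le_mul_of_nonneg_left ht (norm_nonneg (ρ t))

theorem enorm_convolution_lsmul_rpow_le {ρ : G → ℝ} {u : G → V} {p : ℝ} (hp : 1 ≤ p)
    (hρ : AEMeasurable ρ μ) (hu : AEStronglyMeasurable u μ) (x : G) :
    ‖(ρ ⋆[lsmul ℝ ℝ, μ] u) x‖ₑ ^ p
      ≤ (∫⁻ t, ‖ρ t‖ₑ * ‖u (x - t)‖ₑ ^ p ∂μ) * (∫⁻ t, ‖ρ t‖ₑ ∂μ) ^ (p - 1) := by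
  have hp0 : 0 < p := by linarith
  have hp' : 0 ≤ 1 - 1 / p := by rw [sub_nonneg, div_le_one hp0]; exact hp
  have hux : AEMeasurable (fun t ↦ ‖u (x - t)‖ₑ) μ :=
    (hu.comp_quasiMeasurePreserving (quasiMeasurePreserving_sub_left μ x)).enorm
  have hsplit (t : G) : ‖ρ t‖ₑ * ‖u (x - t)‖ₑ
      = (‖ρ t‖ₑ * ‖u (x - t)‖ₑ ^ p) ^ (1 / p) * ‖ρ t‖ₑ ^ (1 - 1 / p) := by
    rw [ENNReal.mul_rpow_of_nonneg _ _ (by positivity), ← ENNReal.rpow_mul,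
      mul_one_div_cancel hp0.ne', ENNReal.rpow_one, mul_right_comm,
      ← ENNReal.rpow_add_of_nonneg _ _ (by positivity) hp', add_sub_cancel, ENNReal.rpow_one]
  have hHolder : ‖(ρ ⋆[lsmul ℝ ℝ, μ] u) x‖ₑ
      ≤ (∫⁻ t, ‖ρ t‖ₑ * ‖u (x - t)‖ₑ ^ p ∂μ) ^ (1 / p) * (∫⁻ t, ‖ρ t‖ₑ ∂μ) ^ (1 - 1 / p) :=
    calc ‖(ρ ⋆[lsmul ℝ ℝ, μ] u) x‖ₑ ≤ ∫⁻ t, ‖ρ t‖ₑ * ‖u (x - t)‖ₑ ∂μ :=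
          (enorm_integral_le_lintegral_enorm _).trans_eq (by simp [enorm_smul])
      _ = ∫⁻ t, (‖ρ t‖ₑ * ‖u (x - t)‖ₑ ^ p) ^ (1 / p) * ‖ρ t‖ₑ ^ (1 - 1 / p) ∂μ :=
          lintegral_congr hsplit
      _ ≤ _ := ENNReal.lintegral_mul_norm_pow_le (hρ.enorm.mul (hux.pow_const p)) hρ.enorm
          (by positivity) hp' (by ring)
  calc ‖(ρ ⋆[lsmul ℝ ℝ, μ] u) x‖ₑ ^ p
      ≤ ((∫⁻ t, ‖ρ t‖ₑ * ‖u (x - t)‖ₑ ^ p ∂μ) ^ (1 / p)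
          * (∫⁻ t, ‖ρ t‖ₑ ∂μ) ^ (1 - 1 / p)) ^ p := by gcongr
    _ = _ := by
        rw [ENNReal.mul_rpow_of_nonneg _ _ hp0.le, ← ENNReal.rpow_mul, ← ENNReal.rpow_mul,
          one_div_mul_cancel hp0.ne', ENNReal.rpow_one, sub_mul, one_mul,
          one_div_mul_cancel hp0.ne']

/-- Young's inequality `L¹ ⋆ Lᵖ ⊆ Lᵖ`. -/
theorem lintegral_enorm_convolution_lsmul_rpow_le {ρ : G → ℝ} {u : G → V} {p : ℝ} (hp : 1 ≤ p)
    (hρ : AEMeasurable ρ μ) (hu : AEStronglyMeasurable u μ) :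
    ∫⁻ x, ‖(ρ ⋆[lsmul ℝ ℝ, μ] u) x‖ₑ ^ p ∂μ
      ≤ (∫⁻ t, ‖ρ t‖ₑ ∂μ) ^ p * ∫⁻ x, ‖u x‖ₑ ^ p ∂μ := by
  have hmeas : AEMeasurable (fun z : G × G ↦ ‖ρ z.2‖ₑ * ‖u (z.1 - z.2)‖ₑ ^ p) (μ.prod μ) :=
    hρ.enorm.comp_snd.mul
      ((hu.comp_quasiMeasurePreserving (quasiMeasurePreserving_sub μ μ)).enorm.pow_const p)
  have hmeas' : AEMeasurable (fun x ↦ ∫⁻ t, ‖ρ t‖ₑ * ‖u (x - t)‖ₑ ^ p ∂μ) μ :=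
    hmeas.lintegral_prod_right'
  have hρp : (∫⁻ t, ‖ρ t‖ₑ ∂μ) * (∫⁻ t, ‖ρ t‖ₑ ∂μ) ^ (p - 1) = (∫⁻ t, ‖ρ t‖ₑ ∂μ) ^ p := by
    conv_lhs => enter [1]; rw [← ENNReal.rpow_one (∫⁻ t, ‖ρ t‖ₑ ∂μ)]
    rw [← ENNReal.rpow_add_of_nonneg _ _ zero_le_one (by linarith), add_sub_cancel]
  calc ∫⁻ x, ‖(ρ ⋆[lsmul ℝ ℝ, μ] u) x‖ₑ ^ p ∂μ
      ≤ ∫⁻ x, (∫⁻ t, ‖ρ t‖ₑ * ‖u (x - t)‖ₑ ^ p ∂μ) * (∫⁻ t, ‖ρ t‖ₑ ∂μ) ^ (p - 1) ∂μ :=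
        lintegral_mono (enorm_convolution_lsmul_rpow_le hp hρ hu)
    _ = (∫⁻ t, ∫⁻ x, ‖ρ t‖ₑ * ‖u (x - t)‖ₑ ^ p ∂μ ∂μ) * (∫⁻ t, ‖ρ t‖ₑ ∂μ) ^ (p - 1) := by
        rw [lintegral_mul_const'' _ hmeas', lintegral_lintegral_swap hmeas]
    _ = (∫⁻ t, ‖ρ t‖ₑ * ∫⁻ x, ‖u x‖ₑ ^ p ∂μ ∂μ) * (∫⁻ t, ‖ρ t‖ₑ ∂μ) ^ (p - 1) := by
        congr 1
        refine lintegral_congr fun t ↦ ?_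
        rw [lintegral_const_mul' _ _ enorm_ne_top,
          lintegral_sub_right_eq_self (fun x ↦ ‖u x‖ₑ ^ p) t]
    _ = _ := by
        rw [lintegral_mul_const'' _ hρ.enorm, mul_right_comm, hρp]

end

section

variable [MeasurableAdd₂ G] [SFinite μ] [μ.IsAddLeftInvariant]

theorem lintegral_setLIntegral_comp_add {f : G → ℝ≥0∞} (hf : AEMeasurable f μ) (s : Set G) :
    ∫⁻ y, ∫⁻ x in s, f (x + y) ∂μ ∂μ = μ s * ∫⁻ x, f x ∂μ := by
  have hmeas : AEMeasurable (fun z : G × G ↦ f (z.2 + z.1)) (μ.prod (μ.restrict s)) :=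
    hf.comp_quasiMeasurePreserving (quasiMeasurePreserving_add_swap _ _)
  rw [lintegral_lintegral_swap hmeas]
  simp_rw [lintegral_add_left_eq_self f]
  rw [setLIntegral_const, mul_comm]

/-- Averaging a local estimate over all translates takes the place of a covering with bounded
overlap. -/
theorem measure_mul_lintegral_le_of_forall_setLIntegral_comp_add_le {f g : G → ℝ≥0∞}
    (hf : AEMeasurable f μ) (hg : AEMeasurable g μ) {s t : Set G} {c : ℝ≥0∞}
    (h : ∀ y, ∫⁻ x in s, f (x + y) ∂μ ≤ c * ∫⁻ x in t, g (x + y) ∂μ) :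
    μ s * ∫⁻ x, f x ∂μ ≤ c * (μ t * ∫⁻ x, g x ∂μ) := by
  have hmeas : AEMeasurable (fun y ↦ ∫⁻ x in t, g (x + y) ∂μ) μ :=
    (hg.comp_quasiMeasurePreserving
      (quasiMeasurePreserving_add_swap μ (μ.restrict t))).lintegral_prod_right'
  rw [← lintegral_setLIntegral_comp_add hf, ← lintegral_setLIntegral_comp_add hg,
    ← lintegral_const_mul'' _ hmeas]
  exact lintegral_mono h

end

end Translation

theorem setLIntegral_ball_comp_add_right {G : Type*} [NormedAddCommGroup G] [MeasurableSpace G]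
    [MeasurableAdd G] (μ : Measure G) [μ.IsAddRightInvariant]
    (f : G → ℝ≥0∞) (y : G) (r : ℝ) :
    ∫⁻ x in ball 0 r, f (x + y) ∂μ = ∫⁻ x in ball y r, f x ∂μ := by
  have := (measurePreserving_add_right μ y).setLIntegral_comp_preimage_emb
    (measurableEmbedding_addRight y) f (ball y r)
  rwa [Metric.preimage_add_right_ball, sub_self] at this

theorem locallyIntegrable_clm_comp {X V W : Type*} [TopologicalSpace X] [MeasurableSpace X]
    {μ : Measure X} [NormedAddCommGroup V] [NormedSpace ℝ V] [NormedAddCommGroup W]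
    [NormedSpace ℝ W] (L : V →L[ℝ] W) {u : X → V} (hu : LocallyIntegrable u μ) :
    LocallyIntegrable (fun x ↦ L (u x)) μ := fun x ↦
  let ⟨s, hs, hi⟩ := hu x
  ⟨s, hs, L.integrable_comp hi⟩

theorem locallyIntegrable_sum_smulRight {ι X V W : Type*} [Fintype ι] [TopologicalSpace X]
    [MeasurableSpace X] {μ : Measure X} [NormedAddCommGroup V] [NormedSpace ℝ V]
    [NormedAddCommGroup W] [NormedSpace ℝ W] (L : ι → V →L[ℝ] ℝ) {g : ι → X → W}
    (hg : ∀ i, LocallyIntegrable (g i) μ) :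
    LocallyIntegrable (fun x ↦ ∑ i, (L i).smulRight (g i x)) μ := by
  have hterm (i : ι) : LocallyIntegrable (fun x ↦ (L i).smulRight (g i x)) μ :=
    locallyIntegrable_clm_comp (ContinuousLinearMap.smulRightL ℝ V W (L i)) (hg i)
  exact locallyIntegrable_finsetSum (f := fun i x ↦ (L i).smulRight (g i x)) Finset.univ
    fun i _ ↦ hterm i

variable {E F : Type*} [NormedAddCommGroup E] [NormedSpace ℝ E] [NormedAddCommGroup F]

section WeakDerivative

variable [NormedSpace ℝ F] [MeasurableSpace E] {μ : Measure E}

/-- `du` is a weak (distributional) Fréchet derivative of `u`: integration by parts against every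
test function holds in every direction. Local integrability is part of the notion, so that the
integrals below are never junk values. -/
structure HasWeakFDeriv (u : E → F) (du : E → E →L[ℝ] F) (μ : Measure E) : Prop where
  locallyIntegrable : LocallyIntegrable u μ
  locallyIntegrable_fderiv : LocallyIntegrable du μ
  integral_fderiv_smul : ∀ ψ : E → ℝ, ContDiff ℝ (⊤ : ℕ∞) ψ → HasCompactSupport ψ →
    ∀ v, ∫ x, fderiv ℝ ψ x v • u x ∂μ = -∫ x, ψ x • du x v ∂μ

variable [BorelSpace E]

theorem HasWeakFDeriv.of_basis {u : E → F} {du : E → E →L[ℝ] F} {ι : Type*}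
    (b : Module.Basis ι ℝ E) (hu : LocallyIntegrable u μ) (hdu : LocallyIntegrable du μ)
    (h : ∀ i (ψ : E → ℝ), ContDiff ℝ (⊤ : ℕ∞) ψ → HasCompactSupport ψ →
      ∫ x, fderiv ℝ ψ x (b i) • u x ∂μ = -∫ x, ψ x • du x (b i) ∂μ) :
    HasWeakFDeriv u du μ where
  locallyIntegrable := hu
  locallyIntegrable_fderiv := hdu
  integral_fderiv_smul ψ hψ hψc v := by
    have hψ1 : ContDiff ℝ 1 ψ := hψ.of_le (mod_cast le_top)
    have hleft (v : E) : Integrable (fun x ↦ fderiv ℝ ψ x v • u x) μ :=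
      hu.integrable_smul_left_of_hasCompactSupport
        ((hψ1.continuous_fderiv one_ne_zero).clm_apply continuous_const) (hψc.fderiv_apply ℝ v)
    have hright (v : E) : Integrable (fun x ↦ ψ x • du x v) μ :=
      (hdu.integrable_smul_left_of_hasCompactSupport hψ1.continuous hψc).apply_continuousLinearMap v
    have hv : v ∈ Submodule.span ℝ (Set.range b) := b.mem_span v
    induction hv using Submodule.span_induction with
    | mem _ hv =>
      obtain ⟨i, rfl⟩ := hv
      exact h i ψ hψ hψc
    | zero => simp
    | add v w _ _ hv hw =>
      simp_rw [map_add, add_smul, smul_add]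
      rw [integral_add (hleft v) (hleft w), integral_add (hright v) (hright w), hv, hw, neg_add]
    | smul c v _ hv =>
      simp_rw [map_smul, smul_assoc, smul_comm (_ : ℝ) c]
      rw [integral_smul, integral_smul, hv, smul_neg]

variable [FiniteDimensional ℝ E] [μ.IsAddHaarMeasure]

theorem integral_fderiv_apply_eq_zero {ψ : E → ℝ} (hψ : ContDiff ℝ 1 ψ)
    (hψc : HasCompactSupport ψ) (v : E) : ∫ x, fderiv ℝ ψ x v ∂μ = 0 := by
  have hψi : Integrable ψ μ := hψ.continuous.integrable_of_hasCompactSupport hψc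
  have hdψ : Integrable (fun x ↦ fderiv ℝ ψ x v) μ :=
    ((hψ.continuous_fderiv one_ne_zero).clm_apply continuous_const).integrable_of_hasCompactSupport
      (hψc.fderiv_apply ℝ v)
  simpa using integral_mul_fderiv_eq_neg_fderiv_mul_of_integrable (μ := μ)
    (f := fun _ : E ↦ (1 : ℝ)) (g := ψ) (v := v) (by simp) (by simpa using hdψ)
    (by simpa using hψi) (by fun_prop) (fun x _ ↦ hψ.differentiable one_ne_zero x)

namespace HasWeakFDeriv

variable {u : E → F} {du : E → E →L[ℝ] F}

theorem sub_const [CompleteSpace F] (h : HasWeakFDeriv u du μ) (c : F) :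
    HasWeakFDeriv (fun x ↦ u x - c) du μ where
  locallyIntegrable := h.locallyIntegrable.sub (locallyIntegrable_const c)
  locallyIntegrable_fderiv := h.locallyIntegrable_fderiv
  integral_fderiv_smul ψ hψ hψc v := by
    have hψ1 : ContDiff ℝ 1 ψ := hψ.of_le (mod_cast le_top)
    have hdψ : Continuous fun x ↦ fderiv ℝ ψ x v :=
      (hψ1.continuous_fderiv one_ne_zero).clm_apply continuous_const
    have hdψc : HasCompactSupport fun x ↦ fderiv ℝ ψ x v := hψc.fderiv_apply ℝ v
    simp_rw [smul_sub]
    rw [integral_sub (h.locallyIntegrable.integrable_smul_left_of_hasCompactSupport hdψ hdψc)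
      ((hdψ.integrable_of_hasCompactSupport hdψc).smul_const c), integral_smul_const,
      integral_fderiv_apply_eq_zero hψ1 hψc, zero_smul, sub_zero, h.integral_fderiv_smul ψ hψ hψc]

theorem fderiv_convolution (h : HasWeakFDeriv u du μ) {ρ : E → ℝ}
    (hρ : ContDiff ℝ (⊤ : ℕ∞) ρ) (hρc : HasCompactSupport ρ) (x : E) :
    fderiv ℝ (ρ ⋆[lsmul ℝ ℝ, μ] u) x = (ρ ⋆[lsmul ℝ ℝ, μ] du) x := by
  have hρ1 : ContDiff ℝ 1 ρ := hρ.of_le (mod_cast le_top)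
  have hu : ConvolutionExistsAt (fderiv ℝ ρ) u x ((lsmul ℝ ℝ).precompL E) μ :=
    (hρc.fderiv ℝ).convolutionExists_left _ (hρ1.continuous_fderiv one_ne_zero)
      h.locallyIntegrable x
  have hdu : ConvolutionExistsAt ρ du x (lsmul ℝ ℝ) μ :=
    hρc.convolutionExists_left _ hρ1.continuous h.locallyIntegrable_fderiv x
  have hreflect (t : E) : fderiv ℝ (fun t ↦ ρ (x - t)) t = -fderiv ℝ ρ (x - t) := by
    have hcomp := ((hρ1.differentiable one_ne_zero) (x - t)).hasFDerivAt.comp t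
      ((hasFDerivAt_id t).const_sub x)
    rw [← ContinuousLinearMap.comp_id (fderiv ℝ ρ (x - t)), ← ContinuousLinearMap.comp_neg]
    exact hcomp.fderiv
  ext v
  have hparts := h.integral_fderiv_smul (fun t ↦ ρ (x - t)) (by fun_prop)
    (hρc.comp_homeomorph (Homeomorph.subLeft x)) v
  simp only [hreflect, neg_apply, neg_smul, integral_neg, neg_inj] at hparts
  rw [(hρc.hasFDerivAt_convolution_left (lsmul ℝ ℝ) hρ1 h.locallyIntegrable x).fderiv,
    convolution_def, convolution_def, ContinuousLinearMap.integral_apply hu,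
    ContinuousLinearMap.integral_apply hdu, ← integral_sub_left_eq_self _ μ x,
    ← integral_sub_left_eq_self (fun t ↦ (lsmul ℝ ℝ (ρ t) (du (x - t))) v) μ x]
  simpa using hparts

end HasWeakFDeriv

end WeakDerivative

section SobolevDensity

variable [NormedSpace ℝ F]

/-- The density `|u|^{2q} + |du|²` of the mixed Sobolev energy of a map `u` with (weak) derivative
`du`; the exponent `2q` is the one for which `|u|^q` has a square integrable gradient whenever `u`
is bounded. -/
def sobolevDensity (q : ℝ) (u : E → F) (du : E → E →L[ℝ] F) (x : E) : ℝ≥0∞ :=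
  ‖u x‖ₑ ^ (2 * q) + ‖du x‖ₑ ^ 2

variable [MeasurableSpace E] [BorelSpace E]

theorem measurable_sobolevDensity_fderiv {u : E → F} (hu : ContDiff ℝ 1 u) (q : ℝ) :
    Measurable (sobolevDensity q u (fderiv ℝ u)) := by
  have := hu.continuous
  have := hu.continuous_fderiv one_ne_zero
  unfold sobolevDensity
  fun_prop

variable {μ : Measure E} [FiniteDimensional ℝ E] [μ.IsAddHaarMeasure]

theorem lintegral_enorm_normed_contDiffBump (b : ContDiffBump (0 : E)) :
    ∫⁻ x, ‖b.normed μ x‖ₑ ∂μ = 1 := by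
  simp_rw [Real.enorm_of_nonneg (b.nonneg_normed _)]
  rw [← ofReal_integral_eq_lintegral_ofReal b.integrable_normed
    (Eventually.of_forall b.nonneg_normed), b.integral_normed, ENNReal.ofReal_one]

variable {u : E → F} {du : E → E →L[ℝ] F}

theorem HasWeakFDeriv.lintegral_sobolevDensity_convolution_le
    (h : HasWeakFDeriv u du μ) (b : ContDiffBump (0 : E)) {q : ℝ} (hq : 1 ≤ 2 * q) :
    let v := b.normed μ ⋆[lsmul ℝ ℝ, μ] u
    ∫⁻ x, sobolevDensity q v (fderiv ℝ v) x ∂μ ≤ ∫⁻ x, sobolevDensity q u du x ∂μ := by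
  intro v
  have hv : ContDiff ℝ 1 v :=
    b.hasCompactSupport_normed.contDiff_convolution_left _ b.contDiff_normed h.locallyIntegrable
  have hb : AEMeasurable (b.normed μ) μ := (b.continuous_normed (μ := μ)).aemeasurable
  have hdv := h.fderiv_convolution (b.contDiff_normed (μ := μ)) b.hasCompactSupport_normed
  have hyoung := lintegral_enorm_convolution_lsmul_rpow_le hq hb
    h.locallyIntegrable.aestronglyMeasurable
  have hyoung' := lintegral_enorm_convolution_lsmul_rpow_le one_le_two hb
    h.locallyIntegrable_fderiv.aestronglyMeasurable
  rw [lintegral_enorm_normed_contDiffBump, ENNReal.one_rpow, one_mul] at hyoung hyoung'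
  simp only [ENNReal.rpow_two] at hyoung'
  simp only [sobolevDensity]
  rw [lintegral_add_left (hv.continuous.enorm.measurable.pow_const _),
    lintegral_add_left' (h.locallyIntegrable.aestronglyMeasurable.enorm.pow_const _)]
  simp_rw [v, hdv]
  exact add_le_add hyoung hyoung'

/-- Mollification, in the spirit of Meyers and Serrin. -/
theorem HasWeakFDeriv.exists_seq_contDiff_tendsto [CompleteSpace F]
    (h : HasWeakFDeriv u du μ) {B q : ℝ} (hB : ∀ᵐ x ∂μ, ‖u x‖ ≤ B) (hq : 1 ≤ 2 * q) :
    ∃ v : ℕ → E → F, (∀ n, ContDiff ℝ 1 (v n)) ∧ (∀ n x, ‖v n x‖ ≤ B) ∧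
      (∀ n, ∫⁻ x, sobolevDensity q (v n) (fderiv ℝ (v n)) x ∂μ ≤ ∫⁻ x, sobolevDensity q u du x ∂μ) ∧
      ∀ᵐ x ∂μ, Tendsto (fun n ↦ v n x) atTop (𝓝 (u x)) := by
  let b (n : ℕ) : ContDiffBump (0 : E) :=
    ⟨1 / (n + 1), 2 * (1 / (n + 1)), by positivity,
      lt_mul_of_one_lt_left (by positivity) one_lt_two⟩
  refine ⟨fun n ↦ (b n).normed μ ⋆[lsmul ℝ ℝ, μ] u, fun n ↦ ?_, fun n x ↦ ?_,
    fun n ↦ h.lintegral_sobolevDensity_convolution_le (b n) hq, ?_⟩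
  · exact (b n).hasCompactSupport_normed.contDiff_convolution_left _ (b n).contDiff_normed
      h.locallyIntegrable
  · refine (norm_convolution_lsmul_le_of_ae_norm_le (b n).integrable_normed hB x).trans_eq ?_
    simp_rw [Real.norm_of_nonneg ((b n).nonneg_normed _)]
    rw [(b n).integral_normed, one_mul]
  · have hradius : Tendsto (fun n : ℕ ↦ 2 * (1 / ((n : ℝ) + 1))) atTop (𝓝 0) := by
      simpa using (tendsto_one_div_add_atTop_nhds_zero_nat (𝕜 := ℝ)).const_mul 2
    exact ContDiffBump.ae_convolution_tendsto_right_of_locallyIntegrable (K := 2) hradius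
      (Eventually.of_forall fun n ↦ le_rfl) h.locallyIntegrable

end SobolevDensity

/-- Hölder's inequality with the exponents `1 / (α - 1)` and `1 / (2 - α)`. -/
theorem lintegral_rpow_mul_enorm_sq_le {X V : Type*} [MeasurableSpace X] {μ : Measure X}
    [NormedAddCommGroup V] {W : X → ℝ≥0∞} (hW : AEMeasurable W μ) {w : X → V}
    (hw : AEStronglyMeasurable w μ) {α : ℝ} (hα : 1 ≤ α) (hα' : α < 2) {p : ℝ≥0}
    (hp : (p : ℝ) = 2 / (2 - α)) :
    ∫⁻ x, W x ^ (α - 1) * ‖w x‖ₑ ^ 2 ∂μ ≤ (∫⁻ x, W x ∂μ) ^ (α - 1) * eLpNorm w p μ ^ 2 := by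
  have hα2 : 0 < 2 - α := sub_pos.2 hα'
  have hp0 : p ≠ 0 := by rw [← NNReal.coe_ne_zero, hp]; positivity
  have hwp (x : X) : ‖w x‖ₑ ^ 2 = (‖w x‖ₑ ^ (p : ℝ)) ^ (2 - α) := by
    rw [← ENNReal.rpow_mul, hp, div_mul_cancel₀ _ hα2.ne', ENNReal.rpow_two]
  have hnorm : eLpNorm w p μ ^ 2 = (∫⁻ x, ‖w x‖ₑ ^ (p : ℝ) ∂μ) ^ (2 - α) := by
    rw [eLpNorm_nnreal_eq_lintegral hp0, ← ENNReal.rpow_two, ← ENNReal.rpow_mul, hp]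
    congr 1
    field_simp
  simp_rw [hnorm, hwp]
  exact ENNReal.lintegral_mul_norm_pow_le hW (hw.enorm.pow_const _) (by linarith) hα2.le (by ring)

section SmoothEstimate

variable [InnerProductSpace ℝ F]

theorem enorm_fderiv_mul_norm_rpow_sq_le {η : E → ℝ} {u : E → F} {q : ℝ} {A : ℝ≥0} {x : E}
    (hη : DifferentiableAt ℝ η x) (hu : Differentiable ℝ u) (hq : 1 < q)
    (hdη : ‖fderiv ℝ η x‖ ≤ A) (hηu : ‖η x‖ * (q * ‖u x‖ ^ (q - 1)) ≤ A) :
    ‖fderiv ℝ (fun z ↦ η z * ‖u z‖ ^ q) x‖ₑ ^ 2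
      ≤ 2 * A ^ 2 * sobolevDensity q u (fderiv ℝ u) x := by
  have hdu : ‖fderiv ℝ (fun z ↦ ‖u z‖ ^ q) x‖ ≤ q * ‖u x‖ ^ (q - 1) * ‖fderiv ℝ u x‖ := by
    lift q to ℝ≥0 using by linarith
    exact norm_fderiv_norm_rpow_le hu hq
  have hnorm : ‖fderiv ℝ (fun z ↦ η z * ‖u z‖ ^ q) x‖ ≤ A * (‖u x‖ ^ q + ‖fderiv ℝ u x‖) :=
    calc ‖fderiv ℝ (fun z ↦ η z * ‖u z‖ ^ q) x‖
        = ‖η x • fderiv ℝ (fun z ↦ ‖u z‖ ^ q) x + ‖u x‖ ^ q • fderiv ℝ η x‖ := by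
          rw [fderiv_fun_mul hη (hu.norm_rpow hq x)]
      _ ≤ ‖η x‖ * ‖fderiv ℝ (fun z ↦ ‖u z‖ ^ q) x‖ + ‖u x‖ ^ q * ‖fderiv ℝ η x‖ := by
          refine (norm_add_le _ _).trans_eq ?_
          rw [norm_smul, norm_smul, Real.norm_of_nonneg (by positivity : 0 ≤ ‖u x‖ ^ q)]
      _ ≤ ‖η x‖ * (q * ‖u x‖ ^ (q - 1) * ‖fderiv ℝ u x‖) + ‖u x‖ ^ q * A := by gcongr
      _ = ‖η x‖ * (q * ‖u x‖ ^ (q - 1)) * ‖fderiv ℝ u x‖ + ‖u x‖ ^ q * A := by ring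
      _ ≤ A * ‖fderiv ℝ u x‖ + ‖u x‖ ^ q * A := by gcongr
      _ = A * (‖u x‖ ^ q + ‖fderiv ℝ u x‖) := by ring
  have henorm : ‖fderiv ℝ (fun z ↦ η z * ‖u z‖ ^ q) x‖ₑ ≤ A * (‖u x‖ₑ ^ q + ‖fderiv ℝ u x‖ₑ) := by
    have := ENNReal.ofReal_le_ofReal hnorm
    rwa [ENNReal.ofReal_mul A.coe_nonneg, ENNReal.ofReal_add (by positivity) (by positivity),
      ← ENNReal.ofReal_rpow_of_nonneg (norm_nonneg _) (by linarith), ENNReal.ofReal_coe_nnreal,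
      ofReal_norm, ofReal_norm, ofReal_norm] at this
  have hsq : (‖u x‖ₑ ^ q + ‖fderiv ℝ u x‖ₑ) ^ 2 ≤ 2 * ((‖u x‖ₑ ^ q) ^ 2 + ‖fderiv ℝ u x‖ₑ ^ 2) := by
    simpa [show (2 : ℝ) - 1 = 1 by norm_num] using
      ENNReal.rpow_add_le_mul_rpow_add_rpow (‖u x‖ₑ ^ q) ‖fderiv ℝ u x‖ₑ one_le_two
  have hpow : (‖u x‖ₑ ^ q) ^ 2 = ‖u x‖ₑ ^ (2 * q) := by
    rw [← ENNReal.rpow_two, ← ENNReal.rpow_mul, mul_comm]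
  calc ‖fderiv ℝ (fun z ↦ η z * ‖u z‖ ^ q) x‖ₑ ^ 2
      ≤ (A * (‖u x‖ₑ ^ q + ‖fderiv ℝ u x‖ₑ)) ^ 2 := by gcongr
    _ ≤ A ^ 2 * (2 * ((‖u x‖ₑ ^ q) ^ 2 + ‖fderiv ℝ u x‖ₑ ^ 2)) := by
        rw [mul_pow]
        gcongr
    _ = 2 * A ^ 2 * sobolevDensity q u (fderiv ℝ u) x := by
        rw [hpow, sobolevDensity]
        ring

variable [MeasurableSpace E] [BorelSpace E] [FiniteDimensional ℝ E] (μ : Measure E)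
  [μ.IsAddHaarMeasure]

theorem exists_eLpNorm_mul_norm_rpow_sq_le {η : E → ℝ} (hη : ContDiff ℝ 1 η)
    (hηc : HasCompactSupport η) {q : ℝ} (hq : 1 < q) (B : ℝ) (hdim : 2 < finrank ℝ E) {p : ℝ≥0}
    (hp : 2⁻¹ - (finrank ℝ E : ℝ)⁻¹ ≤ (p : ℝ)⁻¹) :
    ∃ C : ℝ≥0, ∀ u : E → F, ContDiff ℝ 1 u → (∀ x, ‖u x‖ ≤ B) →
      eLpNorm (fun x ↦ η x * ‖u x‖ ^ q) p μ ^ 2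
        ≤ C * ∫⁻ x in tsupport η, sobolevDensity q u (fderiv ℝ u) x ∂μ := by
  obtain ⟨M, hM⟩ := hη.continuous.bounded_above_of_compact_support hηc
  obtain ⟨M', hM'⟩ :=
    (hη.continuous_fderiv one_ne_zero).bounded_above_of_compact_support (hηc.fderiv ℝ)
  let A : ℝ≥0 := max M' (M * (q * B ^ (q - 1))) |>.toNNReal
  let S := eLpNormLESNormFDerivOfLeConst ℝ μ (tsupport η) 2 p
  refine ⟨S ^ 2 * (2 * A ^ 2), fun u hu hB ↦ ?_⟩
  set w : E → ℝ := fun x ↦ η x * ‖u x‖ ^ q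
  have hsupp : Function.support w ⊆ tsupport η :=
    (Function.support_mul_subset_left _ _).trans (subset_tsupport η)
  have hgrad (x : E) : ‖fderiv ℝ w x‖ₑ ^ 2 ≤ 2 * A ^ 2 * sobolevDensity q u (fderiv ℝ u) x := by
    refine enorm_fderiv_mul_norm_rpow_sq_le (hη.differentiable one_ne_zero x)
      (hu.differentiable one_ne_zero) hq ?_ ?_
    · exact (hM' x).trans ((le_max_left _ _).trans (Real.le_coe_toNNReal _))
    · have := (norm_nonneg _).trans (hM x)
      refine le_trans ?_ ((le_max_right _ _).trans (Real.le_coe_toNNReal _))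
      gcongr
      · exact hM x
      · exact hB x
  have hgrad_supp : Function.support (fun x ↦ ‖fderiv ℝ w x‖ₑ ^ 2) ⊆ tsupport η := by
    refine fun x hx ↦ closure_minimal hsupp (isClosed_tsupport η) (support_fderiv_subset ℝ ?_)
    exact fun h0 ↦ hx (by simp only [← ofReal_norm, h0]; simp)
  have hsobolev : eLpNorm w p μ ≤ S * eLpNorm (fderiv ℝ w) (2 : ℝ≥0) μ :=
    eLpNorm_le_eLpNorm_fderiv_of_le μ (hη.mul (hu.norm_rpow hq)) hsupp one_le_two
      (mod_cast hdim) (mod_cast hp) hηc.isCompact.isBounded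
  calc eLpNorm w p μ ^ 2 ≤ S ^ 2 * eLpNorm (fderiv ℝ w) (2 : ℝ≥0) μ ^ 2 := by
        rw [← mul_pow]; gcongr
    _ = S ^ 2 * ∫⁻ x in tsupport η, ‖fderiv ℝ w x‖ₑ ^ 2 ∂μ := by
        rw [setLIntegral_eq_of_support_subset hgrad_supp, ← ENNReal.rpow_natCast _ 2]
        congr 1
        simpa using eLpNorm_nnreal_pow_eq_lintegral (f := fderiv ℝ w) (μ := μ) (p := 2) two_ne_zero
    _ ≤ S ^ 2 * ∫⁻ x in tsupport η, 2 * A ^ 2 * sobolevDensity q u (fderiv ℝ u) x ∂μ := by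
        gcongr with x
        exact hgrad x
    _ = _ := by
        rw [lintegral_const_mul' _ _ (by finiteness), ← mul_assoc]
        push_cast
        rfl

theorem exists_setLIntegral_ball_rpow_mul_enorm_rpow_le {q : ℝ} (hq : 1 < q) (B : ℝ)
    (hdim : 2 < finrank ℝ E) {α : ℝ} (hα : 1 ≤ α) (hα' : α ≤ 1 + 2 / finrank ℝ E) {r : ℝ}
    (hr : 0 < r) :
    ∃ C : ℝ≥0, ∀ u : E → F, ContDiff ℝ 1 u → (∀ x, ‖u x‖ ≤ B) → ∀ W : E → ℝ≥0∞, AEMeasurable W μ →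
      ∫⁻ x in ball 0 (r / 2), W x ^ (α - 1) * ‖u x‖ₑ ^ (2 * q) ∂μ
        ≤ C * (∫⁻ x in ball 0 r, W x ∂μ) ^ (α - 1)
          * ∫⁻ x in closedBall 0 r, sobolevDensity q u (fderiv ℝ u) x ∂μ := by
  have hn : (2 : ℝ) < finrank ℝ E := mod_cast hdim
  have hα2 : α < 2 := by
    have : 2 / (finrank ℝ E : ℝ) < 1 := (div_lt_one (by linarith)).2 hn
    linarith
  obtain ⟨p, hp⟩ : ∃ p : ℝ≥0, (p : ℝ) = 2 / (2 - α) :=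
    ⟨⟨_, div_nonneg zero_le_two (sub_pos.2 hα2).le⟩, rfl⟩
  let b : ContDiffBump (0 : E) := ⟨r / 2, r, half_pos hr, half_lt_self hr⟩
  obtain ⟨C, hC⟩ := exists_eLpNorm_mul_norm_rpow_sq_le (F := F) μ b.contDiff b.hasCompactSupport
    hq B hdim (p := p) (by rw [hp, inv_div]; simp only [div_eq_mul_inv] at hα'; linarith)
  refine ⟨C, fun u hu hB W hW ↦ ?_⟩
  set w : E → ℝ := fun x ↦ b x * ‖u x‖ ^ q
  have hw : AEStronglyMeasurable w μ :=
    (b.continuous.mul (hu.continuous.norm.rpow_const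
      fun _ ↦ Or.inr (by linarith))).aestronglyMeasurable
  have hw_eq (x : E) (hx : x ∈ ball 0 (r / 2)) : ‖u x‖ₑ ^ (2 * q) = ‖w x‖ₑ ^ 2 := by
    simp only [w]
    rw [b.one_of_mem_closedBall (Metric.ball_subset_closedBall hx), one_mul,
      Real.enorm_rpow_of_nonneg (norm_nonneg _) (by linarith), enorm_norm, ← ENNReal.rpow_two,
      ← ENNReal.rpow_mul, mul_comm]
  calc ∫⁻ x in ball 0 (r / 2), W x ^ (α - 1) * ‖u x‖ₑ ^ (2 * q) ∂μ
      = ∫⁻ x in ball 0 (r / 2), W x ^ (α - 1) * ‖w x‖ₑ ^ 2 ∂μ :=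
        setLIntegral_congr_fun measurableSet_ball fun x hx ↦ by simp only [hw_eq x hx]
    _ ≤ ∫⁻ x in ball 0 r, W x ^ (α - 1) * ‖w x‖ₑ ^ 2 ∂μ :=
        lintegral_mono_set (Metric.ball_subset_ball (half_le_self hr.le))
    _ ≤ (∫⁻ x in ball 0 r, W x ∂μ) ^ (α - 1) * eLpNorm w p (μ.restrict (ball 0 r)) ^ 2 :=
        lintegral_rpow_mul_enorm_sq_le hW.restrict hw.restrict hα hα2 hp
    _ ≤ (∫⁻ x in ball 0 r, W x ∂μ) ^ (α - 1)
          * (C * ∫⁻ x in closedBall 0 r, sobolevDensity q u (fderiv ℝ u) x ∂μ) := by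
        gcongr
        exact (pow_le_pow_left' (eLpNorm_restrict_le _ _ _ _) 2).trans
          (by simpa only [b.tsupport_eq] using hC u hu hB)
    _ = _ := by ring

theorem exists_lintegral_rpow_mul_enorm_rpow_le {q : ℝ} (hq : 1 < q) (B : ℝ)
    (hdim : 2 < finrank ℝ E) {α : ℝ} (hα : 1 ≤ α) (hα' : α ≤ 1 + 2 / finrank ℝ E) {r : ℝ}
    (hr : 0 < r) :
    ∃ C : ℝ≥0, ∀ u : E → F, ContDiff ℝ 1 u → (∀ x, ‖u x‖ ≤ B) → ∀ W : E → ℝ≥0∞, AEMeasurable W μ →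
      ∀ K, (∀ y, ∫⁻ x in ball y r, W x ∂μ ≤ K) →
        ∫⁻ x, W x ^ (α - 1) * ‖u x‖ₑ ^ (2 * q) ∂μ
          ≤ C * K ^ (α - 1) * ∫⁻ x, sobolevDensity q u (fderiv ℝ u) x ∂μ := by
  obtain ⟨C, hC⟩ :=
    exists_setLIntegral_ball_rpow_mul_enorm_rpow_le (F := F) μ hq B hdim hα hα' hr
  set m := μ (ball 0 (r / 2))
  have hm0 : m ≠ 0 := (Metric.measure_ball_pos μ 0 (half_pos hr)).ne'
  have hm : m ≠ ∞ := measure_ball_lt_top.ne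
  have hM : μ (closedBall 0 r) ≠ ∞ := measure_closedBall_lt_top.ne
  refine ⟨(m⁻¹ * (C * μ (closedBall 0 r))).toNNReal, fun u hu hB W hW K hK ↦ ?_⟩
  rw [ENNReal.coe_toNNReal (by finiteness)]
  have hlocal (y : E) : ∫⁻ x in ball 0 (r / 2), W (x + y) ^ (α - 1) * ‖u (x + y)‖ₑ ^ (2 * q) ∂μ
      ≤ C * K ^ (α - 1)
        * ∫⁻ x in closedBall 0 r, sobolevDensity q u (fderiv ℝ u) (x + y) ∂μ := by
    refine (hC (fun x ↦ u (x + y)) (by fun_prop) (fun x ↦ hB _) (fun x ↦ W (x + y))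
      (hW.comp_quasiMeasurePreserving
        (measurePreserving_add_right μ y).quasiMeasurePreserving)).trans ?_
    rw [setLIntegral_ball_comp_add_right]
    simp only [sobolevDensity, fderiv_comp_add_right]
    gcongr
    exact hK y
  have hf : AEMeasurable (fun x ↦ W x ^ (α - 1) * ‖u x‖ₑ ^ (2 * q)) μ :=
    (hW.pow_const _).mul (hu.continuous.enorm.measurable.pow_const _).aemeasurable
  have haverage : m * ∫⁻ x, W x ^ (α - 1) * ‖u x‖ₑ ^ (2 * q) ∂μ
      ≤ C * K ^ (α - 1)
        * (μ (closedBall 0 r) * ∫⁻ x, sobolevDensity q u (fderiv ℝ u) x ∂μ) :=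
    measure_mul_lintegral_le_of_forall_setLIntegral_comp_add_le hf
      (measurable_sobolevDensity_fderiv hu q).aemeasurable hlocal
  calc ∫⁻ x, W x ^ (α - 1) * ‖u x‖ₑ ^ (2 * q) ∂μ
      = m⁻¹ * (m * ∫⁻ x, W x ^ (α - 1) * ‖u x‖ₑ ^ (2 * q) ∂μ) := by
        rw [← mul_assoc, ENNReal.inv_mul_cancel hm0 hm, one_mul]
    _ ≤ m⁻¹ * (C * K ^ (α - 1)
          * (μ (closedBall 0 r) * ∫⁻ x, sobolevDensity q u (fderiv ℝ u) x ∂μ)) := by gcongr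
    _ = _ := by ring

end SmoothEstimate

theorem lintegral_mul_enorm_rpow_le_of_tendsto {X V : Type*} [MeasurableSpace X] {μ : Measure X}
    [NormedAddCommGroup V] {w : X → ℝ≥0∞} (hw : AEMeasurable w μ) (hw_top : ∀ x, w x ≠ ∞)
    {u : X → V} {v : ℕ → X → V} (hv : ∀ n, AEStronglyMeasurable (v n) μ)
    (hlim : ∀ᵐ x ∂μ, Tendsto (fun n ↦ v n x) atTop (𝓝 (u x))) {s : ℝ} {K : ℝ≥0∞}
    (hK : ∀ n, ∫⁻ x, w x * ‖v n x‖ₑ ^ s ∂μ ≤ K) : ∫⁻ x, w x * ‖u x‖ₑ ^ s ∂μ ≤ K := by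
  have hlim' : ∀ᵐ x ∂μ, Tendsto (fun n ↦ w x * ‖v n x‖ₑ ^ s) atTop (𝓝 (w x * ‖u x‖ₑ ^ s)) := by
    filter_upwards [hlim] with x hx
    exact ENNReal.Tendsto.const_mul (hx.enorm.ennrpow_const _) (Or.inr (hw_top x))
  calc ∫⁻ x, w x * ‖u x‖ₑ ^ s ∂μ = ∫⁻ x, liminf (fun n ↦ w x * ‖v n x‖ₑ ^ s) atTop ∂μ :=
        lintegral_congr_ae (hlim'.mono fun x hx ↦ hx.liminf_eq.symm)
    _ ≤ liminf (fun n ↦ ∫⁻ x, w x * ‖v n x‖ₑ ^ s ∂μ) atTop :=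
        lintegral_liminf_le' fun n ↦ hw.mul ((hv n).enorm.pow_const _)
    _ ≤ liminf (fun _ : ℕ ↦ K) atTop := liminf_le_liminf (Eventually.of_forall hK)
    _ = K := by simp

section WeakEstimate

variable [InnerProductSpace ℝ F] [CompleteSpace F] [MeasurableSpace E] [BorelSpace E]
  [FiniteDimensional ℝ E] (μ : Measure E) [μ.IsAddHaarMeasure]

theorem exists_setLIntegral_enorm_rpow_le {q : ℝ} (hq : 1 < q) (B : ℝ)
    (hdim : 2 < finrank ℝ E) {α : ℝ} (hα : 1 ≤ α) (hα' : α ≤ 1 + 2 / finrank ℝ E) {r : ℝ}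
    (hr : 0 < r) :
    ∃ C : ℝ≥0, ∀ (u : E → F) (du : E → E →L[ℝ] F), HasWeakFDeriv u du μ →
      (∀ᵐ x ∂μ, ‖u x‖ ≤ B) → ∀ D, MeasurableSet D →
      ∀ K, (∀ y, ∫⁻ x in ball y r ∩ D, ‖u x‖ₑ ^ (2 * q) ∂μ ≤ K) →
        ∫⁻ x in D, ‖u x‖ₑ ^ (2 * q * α) ∂μ
          ≤ C * K ^ (α - 1) * ∫⁻ x, sobolevDensity q u du x ∂μ := by
  obtain ⟨C, hC⟩ := exists_lintegral_rpow_mul_enorm_rpow_le (F := F) μ hq B hdim hα hα' hr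
  refine ⟨C, fun u du h hB D hD K hK ↦ ?_⟩
  obtain ⟨v, hv, hvB, hv_energy, hv_lim⟩ := h.exists_seq_contDiff_tendsto hB (q := q) (by linarith)
  let W : E → ℝ≥0∞ := D.indicator fun x ↦ ‖u x‖ₑ ^ (2 * q)
  have hW : AEMeasurable W μ :=
    (h.locallyIntegrable.aestronglyMeasurable.enorm.pow_const _).indicator hD
  have hWK (y : E) : ∫⁻ x in ball y r, W x ∂μ ≤ K := by
    rw [setLIntegral_indicator hD, Set.inter_comm]
    exact hK y
  have hW_top (x : E) : W x ^ (α - 1) ≠ ∞ := by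
    refine ENNReal.rpow_ne_top_of_nonneg (by linarith)
      (ne_top_of_le_ne_top ?_ (Set.indicator_le_self D _ x))
    exact ENNReal.rpow_ne_top_of_nonneg (by linarith) enorm_ne_top
  have hW_eq (x : E) (hx : x ∈ D) : ‖u x‖ₑ ^ (2 * q * α) = W x ^ (α - 1) * ‖u x‖ₑ ^ (2 * q) := by
    simp only [W, Set.indicator_of_mem hx]
    rw [← ENNReal.rpow_mul, ← ENNReal.rpow_add_of_nonneg _ _
      (mul_nonneg (by linarith) (by linarith)) (by linarith)]
    congr 1
    ring
  calc ∫⁻ x in D, ‖u x‖ₑ ^ (2 * q * α) ∂μ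
      = ∫⁻ x in D, W x ^ (α - 1) * ‖u x‖ₑ ^ (2 * q) ∂μ := setLIntegral_congr_fun hD hW_eq
    _ ≤ ∫⁻ x, W x ^ (α - 1) * ‖u x‖ₑ ^ (2 * q) ∂μ := setLIntegral_le_lintegral _ _
    _ ≤ C * K ^ (α - 1) * ∫⁻ x, sobolevDensity q u du x ∂μ :=
        lintegral_mul_enorm_rpow_le_of_tendsto (hW.pow_const _) hW_top
          (fun n ↦ (hv n).continuous.aestronglyMeasurable) hv_lim fun n ↦
            (hC (v n) (hv n) (hvB n) W hW K hWK).trans (mul_le_mul_right (hv_energy n) _)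

end WeakEstimate

section Euclidean

/-- A vector of `R4` regarded as a point of the Euclidean space, so that `nsq` becomes the square
of the norm; `R4` itself carries the supremum norm. -/
abbrev R4.toEuclidean (u : R4) : EuclideanSpace ℝ (Fin 4) := WithLp.toLp 2 u

theorem nsq_eq_norm_toEuclidean_sq (u : R4) : nsq u = ‖R4.toEuclidean u‖ ^ 2 := by
  rw [EuclideanSpace.real_norm_sq_eq]
  simp [nsq, dot, sq]

theorem nsq_nonneg (u : R4) : 0 ≤ nsq u := by
  rw [nsq_eq_norm_toEuclidean_sq]
  positivity

/-- The balls on the left are cubes: the ambient metric on `R3` is the supremum metric. -/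
theorem ball_half_subset_eball (y : R3) (r : ℝ) : ball y (r / 2) ⊆ eball y r := by
  intro x hx
  have hr : 0 < r / 2 := Metric.pos_of_mem_ball hx
  have hcoord (i : Fin 3) : (x i - y i) ^ 2 < (r / 2) ^ 2 :=
    sq_lt_sq' (by linarith [(abs_lt.1 ((dist_pi_lt_iff hr).1 hx i)).1])
      (abs_lt.1 ((dist_pi_lt_iff hr).1 hx i)).2
  calc ∑ i, (x i - y i) ^ 2 ≤ ∑ _i : Fin 3, (r / 2) ^ 2 :=
        Finset.sum_le_sum fun i _ ↦ (hcoord i).le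
    _ < r ^ 2 := by simp; nlinarith

end Euclidean

namespace SkyrmeMap

variable (φ : SkyrmeMap)

/-- The map `φ - P`, with values in `ℝ⁴` carrying its Euclidean norm. -/
def displacement (x : R3) : EuclideanSpace ℝ (Fin 4) := R4.toEuclidean (φ.toFun x - northPole)

/-- The weak Fréchet derivative of `φ`, and of `φ - P`, assembled from the weak partial
derivatives. -/
def weakFDeriv (x : R3) : R3 →L[ℝ] EuclideanSpace ℝ (Fin 4) :=
  ∑ i, (ContinuousLinearMap.proj i : R3 →L[ℝ] ℝ).smulRight (R4.toEuclidean (φ.pderiv i x))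

/-- The density `|φ - P|⁶ + |∇φ|²`. -/
def sobolevIntegrand (x : R3) : ℝ := nsq (φ.toFun x - northPole) ^ 3 + gradSq φ x

theorem gradSq_nonneg (x : R3) : 0 ≤ gradSq φ x := Finset.sum_nonneg fun _ _ ↦ nsq_nonneg _

theorem sobolevIntegrand_nonneg (x : R3) : 0 ≤ φ.sobolevIntegrand x :=
  add_nonneg (pow_nonneg (nsq_nonneg _) 3) (φ.gradSq_nonneg x)

theorem measurable_nsq_sub_northPole : Measurable fun x ↦ nsq (φ.toFun x - northPole) := by
  have := φ.meas
  unfold nsq dot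
  fun_prop

theorem ae_norm_toEuclidean_toFun : ∀ᵐ x, ‖R4.toEuclidean (φ.toFun x)‖ = 1 := by
  filter_upwards [φ.sphere] with x hx
  rwa [nsq_eq_norm_toEuclidean_sq, pow_eq_one_iff_of_nonneg (norm_nonneg _) two_ne_zero] at hx

theorem ae_norm_displacement_le : ∀ᵐ x, ‖φ.displacement x‖ ≤ 2 := by
  have hpole : ‖R4.toEuclidean northPole‖ = 1 := by
    rw [← pow_eq_one_iff_of_nonneg (norm_nonneg _) two_ne_zero, ← nsq_eq_norm_toEuclidean_sq]
    simp [nsq, dot, northPole, Fin.sum_univ_four]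
  filter_upwards [φ.ae_norm_toEuclidean_toFun] with x hx
  calc ‖φ.displacement x‖ ≤ ‖R4.toEuclidean (φ.toFun x)‖ + ‖R4.toEuclidean northPole‖ :=
        norm_sub_le (φ.toFun x).toEuclidean northPole.toEuclidean
    _ = 2 := by rw [hx, hpole]; norm_num

theorem locallyIntegrable_toEuclidean_toFun :
    LocallyIntegrable (fun x ↦ R4.toEuclidean (φ.toFun x)) := by
  have hmeas : Measurable fun x ↦ R4.toEuclidean (φ.toFun x) :=
    (WithLp.measurable_toLp 2 _).comp φ.meas
  refine (locallyIntegrable_const (1 : ℝ)).mono hmeas.aestronglyMeasurable ?_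
  filter_upwards [φ.ae_norm_toEuclidean_toFun] with x hx
  simp [hx]

theorem locallyIntegrable_toEuclidean_pderiv (i : Fin 3) :
    LocallyIntegrable (fun x ↦ R4.toEuclidean (φ.pderiv i x)) :=
  locallyIntegrable_clm_comp (EuclideanSpace.equiv (Fin 4) ℝ).symm.toContinuousLinearMap
    (φ.pderiv_locInt i)

theorem weakFDeriv_single (x : R3) (i : Fin 3) :
    φ.weakFDeriv x (Pi.single i 1) = R4.toEuclidean (φ.pderiv i x) := by
  simp [weakFDeriv, Pi.single_apply]

theorem locallyIntegrable_weakFDeriv : LocallyIntegrable φ.weakFDeriv :=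
  locallyIntegrable_sum_smulRight (fun i : Fin 3 ↦ (ContinuousLinearMap.proj i : R3 →L[ℝ] ℝ))
    φ.locallyIntegrable_toEuclidean_pderiv

theorem hasWeakFDeriv_displacement : HasWeakFDeriv φ.displacement φ.weakFDeriv volume := by
  refine HasWeakFDeriv.sub_const (HasWeakFDeriv.of_basis (Pi.basisFun ℝ (Fin 3))
    φ.locallyIntegrable_toEuclidean_toFun φ.locallyIntegrable_weakFDeriv fun i ψ hψ hψc ↦ ?_)
    (R4.toEuclidean northPole)
  have hψ1 : ContDiff ℝ 1 ψ := hψ.of_le (mod_cast le_top)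
  have hdψ : Continuous fun x ↦ fderiv ℝ ψ x (Pi.single i 1) :=
    (hψ1.continuous_fderiv one_ne_zero).clm_apply continuous_const
  have hu := φ.locallyIntegrable_toEuclidean_toFun.integrable_smul_left_of_hasCompactSupport hdψ
    (hψc.fderiv_apply ℝ _)
  have hdu := (φ.locallyIntegrable_toEuclidean_pderiv i).integrable_smul_left_of_hasCompactSupport
    hψ1.continuous hψc
  simp_rw [Pi.basisFun_apply, weakFDeriv_single]
  ext a
  rw [PiLp.neg_apply, eval_integral_piLp, eval_integral_piLp]
  · exact φ.weak i a ψ ⟨hψ, hψc⟩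
  · exact fun a ↦ hdu.eval_piLp a
  · exact fun a ↦ hu.eval_piLp a

theorem enorm_displacement_rpow (x : R3) {s : ℝ} (hs : 0 ≤ s) :
    ‖φ.displacement x‖ₑ ^ (2 * s) = ENNReal.ofReal (nsq (φ.toFun x - northPole) ^ s) := by
  rw [nsq_eq_norm_toEuclidean_sq, ← ENNReal.ofReal_rpow_of_nonneg (by positivity) hs,
    ENNReal.ofReal_pow (norm_nonneg _), ofReal_norm, ENNReal.rpow_mul, ENNReal.rpow_two]
  rfl

theorem norm_weakFDeriv_sq_le (x : R3) : ‖φ.weakFDeriv x‖ ^ 2 ≤ 3 * gradSq φ x := by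
  have hproj (i : Fin 3) : ‖(ContinuousLinearMap.proj i : R3 →L[ℝ] ℝ)‖ ≤ 1 :=
    ContinuousLinearMap.opNorm_le_bound _ zero_le_one fun v ↦ by simpa using norm_le_pi_norm v i
  have hnorm : ‖φ.weakFDeriv x‖ ≤ ∑ i, ‖R4.toEuclidean (φ.pderiv i x)‖ := by
    refine norm_sum_le_of_le _ fun i _ ↦ ?_
    rw [ContinuousLinearMap.norm_smulRight_apply]
    exact mul_le_of_le_one_left (norm_nonneg _) (hproj i)
  calc ‖φ.weakFDeriv x‖ ^ 2 ≤ (∑ i, ‖R4.toEuclidean (φ.pderiv i x)‖) ^ 2 := by gcongr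
    _ ≤ 3 * ∑ i, ‖R4.toEuclidean (φ.pderiv i x)‖ ^ 2 := by
        simpa using sq_sum_le_card_mul_sum_sq (s := Finset.univ)
          (f := fun i ↦ ‖R4.toEuclidean (φ.pderiv i x)‖)
    _ = 3 * gradSq φ x := by simp_rw [gradSq, nsq_eq_norm_toEuclidean_sq]

theorem sobolevDensity_le (x : R3) :
    sobolevDensity 3 φ.displacement φ.weakFDeriv x
      ≤ 3 * ENNReal.ofReal (φ.sobolevIntegrand x) := by
  rw [sobolevDensity, φ.enorm_displacement_rpow x zero_le_three, ← ofReal_norm,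
    ← ENNReal.ofReal_pow (norm_nonneg _),
    ← ENNReal.ofReal_add (Real.rpow_nonneg (nsq_nonneg _) _) (by positivity),
    ← ENNReal.ofReal_ofNat 3, ← ENNReal.ofReal_mul zero_le_three]
  gcongr
  have := φ.gradSq_nonneg x
  have := pow_nonneg (nsq_nonneg (φ.toFun x - northPole)) 3
  norm_num [sobolevIntegrand]
  linarith [φ.norm_weakFDeriv_sq_le x]

end SkyrmeMap

theorem setIntegral_le_iSup {ι X : Type*} [MeasurableSpace X] {μ : Measure X} {f : X → ℝ}
    (hf : Integrable f μ) (hf0 : 0 ≤ f) (s : ι → Set X) (i : ι) :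
    ∫ x in s i, f x ∂μ ≤ ⨆ j, ∫ x in s j, f x ∂μ :=
  le_ciSup (f := fun j ↦ ∫ x in s j, f x ∂μ)
    ⟨∫ x, f x ∂μ, Set.forall_mem_range.2 fun _ ↦
      setIntegral_le_integral hf (Eventually.of_forall hf0)⟩ i

namespace SkyrmeMap

variable {φ : SkyrmeMap}

theorem lintegral_sobolevDensity_le (hφ : Integrable φ.sobolevIntegrand) :
    ∫⁻ x, sobolevDensity 3 φ.displacement φ.weakFDeriv x
      ≤ 3 * ENNReal.ofReal (∫ x, φ.sobolevIntegrand x) := by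
  rw [ofReal_integral_eq_lintegral_ofReal hφ (Eventually.of_forall φ.sobolevIntegrand_nonneg),
    ← lintegral_const_mul' _ _ ENNReal.ofNat_ne_top]
  exact lintegral_mono φ.sobolevDensity_le

theorem setLIntegral_ball_enorm_displacement_le (hφ : Integrable φ.sobolevIntegrand)
    {D : Set R3} (y : R3) :
    ∫⁻ x in ball y (1 / 2) ∩ D, ‖φ.displacement x‖ₑ ^ (2 * 3 : ℝ)
      ≤ ENNReal.ofReal (⨆ z, ∫ x in eball z 1 ∩ D, φ.sobolevIntegrand x) := by
  have hpoint (x : R3) :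
      ‖φ.displacement x‖ₑ ^ (2 * 3 : ℝ) ≤ ENNReal.ofReal (φ.sobolevIntegrand x) := by
    rw [φ.enorm_displacement_rpow x zero_le_three]
    gcongr
    norm_num [sobolevIntegrand, φ.gradSq_nonneg x]
  calc ∫⁻ x in ball y (1 / 2) ∩ D, ‖φ.displacement x‖ₑ ^ (2 * 3 : ℝ)
      ≤ ∫⁻ x in eball y 1 ∩ D, ENNReal.ofReal (φ.sobolevIntegrand x) :=
        lintegral_mono' (Measure.restrict_mono_set _
          (Set.inter_subset_inter_left D (ball_half_subset_eball y 1))) hpoint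
    _ = ENNReal.ofReal (∫ x in eball y 1 ∩ D, φ.sobolevIntegrand x) :=
        (ofReal_integral_eq_lintegral_ofReal hφ.integrableOn
          (Eventually.of_forall φ.sobolevIntegrand_nonneg)).symm
    _ ≤ _ := ENNReal.ofReal_le_ofReal
        (setIntegral_le_iSup hφ φ.sobolevIntegrand_nonneg (fun z ↦ eball z 1 ∩ D) y)

/-- The exponent `5 / 3` is `1 + 2 / d` in dimension `d = 3`. -/
theorem exists_setLIntegral_enorm_displacement_rpow_le {α : ℝ} (hα : 1 ≤ α) (hα' : α ≤ 5 / 3) :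
    ∃ C : ℝ≥0, ∀ φ : SkyrmeMap, Integrable φ.sobolevIntegrand → ∀ D, MeasurableSet D →
      ∫⁻ x in D, ‖φ.displacement x‖ₑ ^ (2 * (3 * α))
        ≤ ENNReal.ofReal (C * (⨆ y, ∫ x in eball y 1 ∩ D, φ.sobolevIntegrand x) ^ (α - 1)
            * ∫ x, φ.sobolevIntegrand x) := by
  obtain ⟨C, hC⟩ := exists_setLIntegral_enorm_rpow_le (F := EuclideanSpace ℝ (Fin 4))
    (volume : Measure R3) (q := 3) (by norm_num) 2 (by simp) hα
    (by norm_num; linarith) one_half_pos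
  refine ⟨3 * C, fun φ hφ D hD ↦ ?_⟩
  set c : ℝ := ⨆ y, ∫ x in eball y 1 ∩ D, φ.sobolevIntegrand x
  have hc : 0 ≤ c := Real.iSup_nonneg fun y ↦ integral_nonneg φ.sobolevIntegrand_nonneg
  calc ∫⁻ x in D, ‖φ.displacement x‖ₑ ^ (2 * (3 * α))
      = ∫⁻ x in D, ‖φ.displacement x‖ₑ ^ (2 * 3 * α) := by simp_rw [mul_assoc]
    _ ≤ C * ENNReal.ofReal c ^ (α - 1) * ∫⁻ x, sobolevDensity 3 φ.displacement φ.weakFDeriv x :=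
        hC _ _ φ.hasWeakFDeriv_displacement φ.ae_norm_displacement_le D hD _
          (setLIntegral_ball_enorm_displacement_le hφ)
    _ ≤ C * ENNReal.ofReal c ^ (α - 1)
          * (3 * ENNReal.ofReal (∫ x, φ.sobolevIntegrand x)) := by
        grw [lintegral_sobolevDensity_le hφ]
    _ = ENNReal.ofReal ((3 * C : ℝ≥0) * c ^ (α - 1) * ∫ x, φ.sobolevIntegrand x) := by
        rw [ENNReal.ofReal_rpow_of_nonneg hc (by linarith), ENNReal.ofReal_mul (by positivity),
          ENNReal.ofReal_mul (by positivity), ENNReal.ofReal_coe_nnreal, ENNReal.coe_mul,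
          ENNReal.coe_ofNat]
        ring

end SkyrmeMap

theorem skyrme_global_sobolev_general (α : ℝ) (hα : 1 ≤ α) (hα' : α ≤ 5 / 3) :
    ∃ C : ℝ, 0 < C ∧ ∀ φ : SkyrmeMap,
      Integrable (fun x ↦ nsq (φ.toFun x - northPole) ^ 3 + gradSq φ x) →
      ∀ D : Set R3, MeasurableSet D →
        ∫ x in D, nsq (φ.toFun x - northPole) ^ (3 * α)
          ≤ C * (⨆ y : R3, ∫ x in eball y 1 ∩ D,
                (nsq (φ.toFun x - northPole) ^ 3 + gradSq φ x)) ^ (α - 1)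
              * ∫ x, (nsq (φ.toFun x - northPole) ^ 3 + gradSq φ x) := by
  obtain ⟨C, hC⟩ := SkyrmeMap.exists_setLIntegral_enorm_displacement_rpow_le hα hα'
  refine ⟨C + 1, by positivity, fun φ hφ D hD ↦ ?_⟩
  change _ ≤ ((C : ℝ) + 1) * (⨆ y, ∫ x in eball y 1 ∩ D, φ.sobolevIntegrand x) ^ (α - 1)
    * ∫ x, φ.sobolevIntegrand x
  have hc : 0 ≤ ⨆ y, ∫ x in eball y 1 ∩ D, φ.sobolevIntegrand x :=
    Real.iSup_nonneg fun y ↦ integral_nonneg φ.sobolevIntegrand_nonneg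
  have hI : 0 ≤ ∫ x, φ.sobolevIntegrand x := integral_nonneg φ.sobolevIntegrand_nonneg
  have hbound := hC φ hφ D hD
  simp_rw [φ.enorm_displacement_rpow _ (by positivity : 0 ≤ 3 * α)] at hbound
  rw [integral_eq_lintegral_of_nonneg_ae
    (Eventually.of_forall fun x ↦ Real.rpow_nonneg (nsq_nonneg _) _)
    (φ.measurable_nsq_sub_northPole.pow_const _).aestronglyMeasurable]
  refine (ENNReal.toReal_le_of_le_ofReal (by positivity) hbound).trans ?_
  gcongr
  linarith

/-- global estimate obtained by summing the local ones over a covering. -/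
theorem skyrme_global_sobolev (α : ℝ) (hα : 1 < α) (hα' : α < 3 / 2) :
    ∃ C : ℝ, 0 < C ∧ ∀ (φ : SkyrmeMap), memX φ →
      Integrable (fun x => (nsq (φ.toFun x - northPole)) ^ 3 + gradSq φ x) volume →
      ∀ D : Set R3, MeasurableSet D →
        ∫ x in D, (nsq (φ.toFun x - northPole)) ^ (3 * α)
          ≤ C * (⨆ y : R3, ∫ x in eball y 1 ∩ D,
                ((nsq (φ.toFun x - northPole)) ^ 3 + gradSq φ x)) ^ (α - 1)
              * ∫ x, ((nsq (φ.toFun x - northPole)) ^ 3 + gradSq φ x) := by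
  obtain ⟨C, hC, h⟩ := skyrme_global_sobolev_general α hα.le (by linarith)
  exact ⟨C, hC, fun φ _ ↦ h φ⟩
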